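/- Let m be a positive integer and q₁,…,q_s prime powers with 2m | q_i+1. Let G = G₁ × ⋯ × G_s with G_i elementary abelian of order q_i⁴ and u = q₁²⋯q_s². Then there exists a strongly regular Cayley graph on G with Latin square type parameters (u², c(u−1), u+c²−3c, c²−c) for each c of the form c = (i+j)(u−1)/m + j with 0 ≤ i ≤ m−2, j ∈ {0,1,2}, and for each c of the form c = (j+i)(u−1)/m + 2j with 0 ≤ i ≤ m−1, j ∈ {0,1}. -/

import Mathlib

open scoped Classical

set_option linter.unusedSimpArgs false
set_option linter.unusedSectionVars false
set_option linter.style.haveILetI false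



def BBLab {m : ℕ} {A : Type*} [CommRing A] (τ : AddChar (ZMod m) A) (x : A) : Prop := ∃ t, τ t = x

def BBDich {m : ℕ} {A : Type*} [CommRing A] (τ : AddChar (ZMod m) A) (a1 a2 b1 b2 : A) : Prop :=
  (BBLab τ a1 ∧ a2 = 0 ∧ BBLab τ b1 ∧ b2 = 0) ∨ (a1 = 0 ∧ BBLab τ a2 ∧ b1 = 0 ∧ BBLab τ b2)

structure BBPair (G : Type*) [AddCommGroup G] [Fintype G] (u : ℕ) where
  e : G → G → ℂ
  add : ∀ x y w, e (x + y) w = e x w * e y w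
  zero : ∀ w, e 0 w = 1
  orth : ∀ x, ∑ w, e x w = if x = 0 then (u : ℂ) ^ 2 else 0
  orth' : ∀ w, ∑ x, e x w = if w = 0 then (u : ℂ) ^ 2 else 0

structure BB {m : ℕ} {A : Type*} [CommRing A] [Algebra ℂ A] (τ : AddChar (ZMod m) A)
    (G : Type*) [AddCommGroup G] [Fintype G] (u : ℕ) extends BBPair G u where
  aE : G → A
  aO : G → A
  bE : G → A
  bO : G → A
  aE' : G → A
  aO' : G → A
  bE' : G → A
  bO' : G → A
  aE0 : aE 0 = 1
  aO0 : aO 0 = 1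
  bE0 : bE 0 = 0
  bO0 : bO 0 = 0
  aE0' : aE' 0 = 1
  aO0' : aO' 0 = 1
  bE0' : bE' 0 = 0
  bO0' : bO' 0 = 0
  aEn : ∀ z, aE (-z) = aE z
  aOn : ∀ z, aO (-z) = aO z
  bEn : ∀ z, bE (-z) = bE z
  bOn : ∀ z, bO (-z) = bO z
  dich : ∀ z, z ≠ 0 → BBDich τ (aE z) (aO z) (bE z) (bO z)
  dich' : ∀ z, z ≠ 0 → BBDich τ (aE' z) (aO' z) (bO' z) (bE' z)
  faE : ∀ w, ∑ z, e z w • aE z = (u : ℂ) • aE' w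
  faO : ∀ w, ∑ z, e z w • aO z = (u : ℂ) • aO' w
  fbE : ∀ w, ∑ z, e z w • bE z = (-u : ℂ) • bE' w
  fbO : ∀ w, ∑ z, e z w • bO z = (-u : ℂ) • bO' w

lemma BBLab.mul {m : ℕ} {A : Type*} [CommRing A] {τ : AddChar (ZMod m) A} {x y : A}
    (hx : BBLab τ x) (hy : BBLab τ y) : BBLab τ (x * y) := by
  obtain ⟨s, rfl⟩ := hx
  obtain ⟨t, rfl⟩ := hy
  exact ⟨s + t, AddChar.map_add_eq_mul _ _ _⟩

lemma bb_sum_prod {A : Type*} [CommRing A] [Algebra ℂ A] {G H : Type*} [Fintype G] [Fintype H]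
    (e1 : G → ℂ) (e2 : H → ℂ) (f1 : G → A) (f2 : H → A) :
    ∑ z : G × H, (e1 z.1 * e2 z.2) • (f1 z.1 * f2 z.2)
      = (∑ z, e1 z • f1 z) * (∑ z, e2 z • f2 z) := by
  rw [Finset.sum_mul_sum, Fintype.sum_prod_type]
  refine Finset.sum_congr rfl fun x _ => Finset.sum_congr rfl fun y _ => ?_
  rw [smul_mul_smul_comm]

def BBPair.prod {G H : Type*} [AddCommGroup G] [Fintype G] [AddCommGroup H] [Fintype H]
    {u v : ℕ} (X : BBPair G u) (Y : BBPair H v) : BBPair (G × H) (u * v) where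
  e z w := X.e z.1 w.1 * Y.e z.2 w.2
  add x y w := by simp only [Prod.fst_add, Prod.snd_add, X.add, Y.add]; ring
  zero w := by simp [X.zero, Y.zero]
  orth x := by
    rw [Fintype.sum_prod_type]
    simp only [← Finset.mul_sum, Y.orth, ← Finset.sum_mul, X.orth]
    by_cases h1 : x.1 = 0 <;> by_cases h2 : x.2 = 0 <;> simp [h1, h2, Prod.ext_iff] ; ring
  orth' x := by
    rw [Fintype.sum_prod_type]
    simp only [← Finset.mul_sum, Y.orth', ← Finset.sum_mul, X.orth']
    by_cases h1 : x.1 = 0 <;> by_cases h2 : x.2 = 0 <;> simp [h1, h2, Prod.ext_iff] ; ring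

lemma bb_dich_prod {m : ℕ} {A : Type*} [CommRing A] (τ : AddChar (ZMod m) A)
    {a1 a2 b1 b2 c1 c2 d1 d2 : A}
    (h1 : BBDich τ a1 a2 b1 b2 ∨ (a1 = 1 ∧ a2 = 1 ∧ b1 = 0 ∧ b2 = 0))
    (h2 : BBDich τ c1 c2 d1 d2 ∨ (c1 = 1 ∧ c2 = 1 ∧ d1 = 0 ∧ d2 = 0))
    (h3 : BBDich τ a1 a2 b1 b2 ∨ BBDich τ c1 c2 d1 d2) :
    BBDich τ (a1 * c1 + b2 * d1) (a2 * c2 + b1 * d2) (b1 * c1 + a2 * d1) (b2 * c2 + a1 * d2) := by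
  rcases h1 with (⟨h1, rfl, h1', rfl⟩ | ⟨rfl, h1, rfl, h1'⟩) | ⟨rfl, rfl, rfl, rfl⟩ <;>
  rcases h2 with (⟨h2, rfl, h2', rfl⟩ | ⟨rfl, h2, rfl, h2'⟩) | ⟨rfl, rfl, rfl, rfl⟩ <;>
  simp only [zero_mul, mul_zero, add_zero, zero_add, mul_one, one_mul] <;>
  first
  | exact Or.inl ⟨by first | assumption | (apply BBLab.mul <;> assumption), rfl, by first | assumption | (apply BBLab.mul <;> assumption), rfl⟩
  | exact Or.inr ⟨rfl, by first | assumption | (apply BBLab.mul <;> assumption), rfl, by first | assumption | (apply BBLab.mul <;> assumption)⟩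
  | simpa using h3

lemma bb_dich_prod' {m : ℕ} {A : Type*} [CommRing A] (τ : AddChar (ZMod m) A)
    {a1 a2 b1 b2 c1 c2 d1 d2 : A}
    (h1 : BBDich τ a1 a2 b1 b2 ∨ (a1 = 1 ∧ a2 = 1 ∧ b1 = 0 ∧ b2 = 0))
    (h2 : BBDich τ c1 c2 d1 d2 ∨ (c1 = 1 ∧ c2 = 1 ∧ d1 = 0 ∧ d2 = 0))
    (h3 : BBDich τ a1 a2 b1 b2 ∨ BBDich τ c1 c2 d1 d2) :
    BBDich τ (a1 * c1 + b1 * d2) (a2 * c2 + b2 * d1) (b1 * c2 + a1 * d1) (b2 * c1 + a2 * d2) := by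
  rcases h1 with (⟨h1, rfl, h1', rfl⟩ | ⟨rfl, h1, rfl, h1'⟩) | ⟨rfl, rfl, rfl, rfl⟩ <;>
  rcases h2 with (⟨h2, rfl, h2', rfl⟩ | ⟨rfl, h2, rfl, h2'⟩) | ⟨rfl, rfl, rfl, rfl⟩ <;>
  simp only [zero_mul, mul_zero, add_zero, zero_add, mul_one, one_mul] <;>
  first
  | exact Or.inl ⟨by first | assumption | (apply BBLab.mul <;> assumption), rfl, by first | assumption | (apply BBLab.mul <;> assumption), rfl⟩
  | exact Or.inr ⟨rfl, by first | assumption | (apply BBLab.mul <;> assumption), rfl, by first | assumption | (apply BBLab.mul <;> assumption)⟩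
  | simpa using h3

noncomputable def BB.prod {m : ℕ} {A : Type*} [CommRing A] [Algebra ℂ A] {τ : AddChar (ZMod m) A}
    {G H : Type*} [AddCommGroup G] [Fintype G] [AddCommGroup H] [Fintype H]
    {u v : ℕ} (X : BB τ G u) (Y : BB τ H v) : BB τ (G × H) (u * v) where
  toBBPair := X.toBBPair.prod Y.toBBPair
  aE z := X.aE z.1 * Y.aE z.2 + X.bO z.1 * Y.bE z.2
  aO z := X.aO z.1 * Y.aO z.2 + X.bE z.1 * Y.bO z.2
  bE z := X.bE z.1 * Y.aE z.2 + X.aO z.1 * Y.bE z.2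
  bO z := X.bO z.1 * Y.aO z.2 + X.aE z.1 * Y.bO z.2
  aE' z := X.aE' z.1 * Y.aE' z.2 + X.bO' z.1 * Y.bE' z.2
  aO' z := X.aO' z.1 * Y.aO' z.2 + X.bE' z.1 * Y.bO' z.2
  bE' z := X.bE' z.1 * Y.aE' z.2 + X.aO' z.1 * Y.bE' z.2
  bO' z := X.bO' z.1 * Y.aO' z.2 + X.aE' z.1 * Y.bO' z.2
  aE0 := by simp [X.aE0, Y.aE0, X.bO0]
  aO0 := by simp [X.aO0, Y.aO0, X.bE0]
  bE0 := by simp [X.bE0, Y.bE0]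
  bO0 := by simp [X.bO0, Y.bO0]
  aE0' := by simp [X.aE0', Y.aE0', X.bO0']
  aO0' := by simp [X.aO0', Y.aO0', X.bE0']
  bE0' := by simp [X.bE0', Y.bE0']
  bO0' := by simp [X.bO0', Y.bO0']
  aEn z := by simp [X.aEn, X.aOn, X.bEn, X.bOn, Y.aEn, Y.aOn, Y.bEn, Y.bOn]
  aOn z := by simp [X.aEn, X.aOn, X.bEn, X.bOn, Y.aEn, Y.aOn, Y.bEn, Y.bOn]
  bEn z := by simp [X.aEn, X.aOn, X.bEn, X.bOn, Y.aEn, Y.aOn, Y.bEn, Y.bOn]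
  bOn z := by simp [X.aEn, X.aOn, X.bEn, X.bOn, Y.aEn, Y.aOn, Y.bEn, Y.bOn]
  dich z hz := by
    apply bb_dich_prod
    · by_cases h : z.1 = 0
      · right; rw [h]; exact ⟨X.aE0, X.aO0, X.bE0, X.bO0⟩
      · left; exact X.dich _ h
    · by_cases h : z.2 = 0
      · right; rw [h]; exact ⟨Y.aE0, Y.aO0, Y.bE0, Y.bO0⟩
      · left; exact Y.dich _ h
    · by_cases h : z.1 = 0
      · right; exact Y.dich _ (fun h' => hz (Prod.ext h h'))
      · left; exact X.dich _ h
  dich' z hz := by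
    apply bb_dich_prod'
    · by_cases h : z.1 = 0
      · right; rw [h]; exact ⟨X.aE0', X.aO0', X.bO0', X.bE0'⟩
      · left; exact X.dich' _ h
    · by_cases h : z.2 = 0
      · right; rw [h]; exact ⟨Y.aE0', Y.aO0', Y.bO0', Y.bE0'⟩
      · left; exact Y.dich' _ h
    · by_cases h : z.1 = 0
      · right; exact Y.dich' _ (fun h' => hz (Prod.ext h h'))
      · left; exact X.dich' _ h
  faE w := by
    simp only [BBPair.prod, smul_add, Finset.sum_add_distrib,
      bb_sum_prod (fun z => X.e z w.1) (fun z => Y.e z w.2),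
      X.faE, X.faO, X.fbE, X.fbO, Y.faE, Y.faO, Y.fbE, Y.fbO, smul_mul_smul_comm]
    push_cast; simp
  faO w := by
    simp only [BBPair.prod, smul_add, Finset.sum_add_distrib,
      bb_sum_prod (fun z => X.e z w.1) (fun z => Y.e z w.2),
      X.faE, X.faO, X.fbE, X.fbO, Y.faE, Y.faO, Y.fbE, Y.fbO, smul_mul_smul_comm]
    push_cast; simp
  fbE w := by
    simp only [BBPair.prod, smul_add, Finset.sum_add_distrib,
      bb_sum_prod (fun z => X.e z w.1) (fun z => Y.e z w.2),
      X.faE, X.faO, X.fbE, X.fbO, Y.faE, Y.faO, Y.fbE, Y.fbO, smul_mul_smul_comm]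
    push_cast; simp
  fbO w := by
    simp only [BBPair.prod, smul_add, Finset.sum_add_distrib,
      bb_sum_prod (fun z => X.e z w.1) (fun z => Y.e z w.2),
      X.faE, X.faO, X.fbE, X.fbO, Y.faE, Y.faO, Y.fbE, Y.fbO, smul_mul_smul_comm]
    push_cast; simp

noncomputable def BB.map {m : ℕ} {A : Type*} [CommRing A] [Algebra ℂ A] {τ : AddChar (ZMod m) A}
    {G H : Type*} [AddCommGroup G] [Fintype G] [AddCommGroup H] [Fintype H]
    {u : ℕ} (X : BB τ G u) (f : H ≃+ G) : BB τ H u where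
  e z w := X.e (f z) (f w)
  add x y w := by simp [X.add]
  zero w := by simp [X.zero]
  orth x := by
    refine (f.toEquiv.sum_comp (fun w => X.e (f x) w)).trans ?_
    rw [X.orth]; simp
  orth' x := by
    refine (f.toEquiv.sum_comp (fun w => X.e w (f x))).trans ?_
    rw [X.orth']; simp
  aE z := X.aE (f z)
  aO z := X.aO (f z)
  bE z := X.bE (f z)
  bO z := X.bO (f z)
  aE' z := X.aE' (f z)
  aO' z := X.aO' (f z)
  bE' z := X.bE' (f z)
  bO' z := X.bO' (f z)
  aE0 := by simp [X.aE0]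
  aO0 := by simp [X.aO0]
  bE0 := by simp [X.bE0]
  bO0 := by simp [X.bO0]
  aE0' := by simp [X.aE0']
  aO0' := by simp [X.aO0']
  bE0' := by simp [X.bE0']
  bO0' := by simp [X.bO0']
  aEn z := by simp [X.aEn]
  aOn z := by simp [X.aOn]
  bEn z := by simp [X.bEn]
  bOn z := by simp [X.bOn]
  dich z hz := X.dich _ (by simpa using hz)
  dich' z hz := X.dich' _ (by simpa using hz)
  faE w := by rw [← X.faE]; exact f.toEquiv.sum_comp (fun z => X.e z (f w) • X.aE z)
  faO w := by rw [← X.faO]; exact f.toEquiv.sum_comp (fun z => X.e z (f w) • X.aO z)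
  fbE w := by rw [← X.fbE]; exact f.toEquiv.sum_comp (fun z => X.e z (f w) • X.bE z)
  fbO w := by rw [← X.fbO]; exact f.toEquiv.sum_comp (fun z => X.e z (f w) • X.bO z)

noncomputable def BB.triv {m : ℕ} {A : Type*} [CommRing A] [Algebra ℂ A] (τ : AddChar (ZMod m) A)
    (G : Type*) [AddCommGroup G] [Fintype G] [Unique G] : BB τ G 1 where
  e z w := 1
  add x y w := by simp
  zero w := by simp
  orth x := by simp [Subsingleton.elim x 0]
  orth' x := by simp [Subsingleton.elim x 0]
  aE z := 1
  aO z := 1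
  bE z := 0
  bO z := 0
  aE' z := 1
  aO' z := 1
  bE' z := 0
  bO' z := 0
  aE0 := by simp
  aO0 := by simp
  bE0 := by simp
  bO0 := by simp
  aE0' := by simp
  aO0' := by simp
  bE0' := by simp
  bO0' := by simp
  aEn z := by simp
  aOn z := by simp
  bEn z := by simp
  bOn z := by simp
  dich z hz := absurd (Subsingleton.elim z 0) hz
  dich' z hz := absurd (Subsingleton.elim z 0) hz
  faE w := by simp
  faO w := by simp
  fbE w := by simp
  fbO w := by simp

lemma BB.pi {m : ℕ} {A : Type*} [CommRing A] [Algebra ℂ A] (τ : AddChar (ZMod m) A) (s : ℕ) :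
    ∀ (q : Fin s → ℕ) (F : Fin s → Type*) [∀ i, AddCommGroup (F i)] [∀ i, Fintype (F i)]
      (_ : ∀ i, Nonempty (BB τ (F i) (q i ^ 2))), Nonempty (BB τ (∀ i, F i) (∏ i, q i ^ 2)) := by
  induction s with
  | zero => intro q F _ _ _; simpa using ⟨BB.triv τ _⟩
  | succ s ih =>
    intro q F _ _ h
    obtain ⟨Y⟩ := ih (fun i => q i.succ) (fun i => F i.succ) (fun i => h i.succ)
    obtain ⟨X⟩ := h 0
    rw [Fin.prod_univ_succ]
    refine ⟨(X.prod Y).map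
      { toFun := fun f => (f 0, fun i => f i.succ)
        invFun := fun p => Fin.cons p.1 p.2
        left_inv := fun f => by ext i; refine Fin.cases ?_ (fun i => ?_) i <;> simp
        right_inv := fun p => by ext <;> simp
        map_add' := fun f g => by ext <;> simp }⟩


lemma bb_lab_exists {m : ℕ} [NeZero m] {A : Type*} [CommRing A] (τ : AddChar (ZMod m) A)
    (hτ : ∑ t, τ t = 0) {ι : Type*} (S : Finset ι) (k : ℕ) (h : S.card = k * m + 1) :
    ∃ lab : ι → ZMod m, ∑ i ∈ S, τ (lab i) = 1 := by
  have hc : Fintype.card S = Fintype.card (Option (Fin k × ZMod m)) := by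
    simp [h, ZMod.card]
  let f := Fintype.equivOfCardEq hc
  let g : Option (Fin k × ZMod m) → ZMod m := fun o => o.elim 0 Prod.snd
  refine ⟨fun i => if hi : i ∈ S then g (f ⟨i, hi⟩) else 0, ?_⟩
  rw [← Finset.sum_coe_sort]
  have : ∀ i : S, τ (if hi : (i : ι) ∈ S then g (f ⟨i, hi⟩) else 0) = τ (g (f i)) := by
    intro i; simp
  simp only [this]
  rw [f.sum_comp (fun o => τ (g o)), Fintype.sum_option, Fintype.sum_prod_type]
  simp [g, hτ]

section quad
variable {K : Type*} [Field K] [Fintype K]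

lemma bb_orth (ψ : AddChar K ℂ) (hψ : ψ.IsPrimitive) (b : K) :
    ∑ x, ψ (x * b) = if b = 0 then (Fintype.card K : ℂ) else 0 := by
  have := AddChar.sum_mulShift b hψ
  rw [this]; split_ifs <;> simp

lemma bb_quad1 (hK : ringChar K ≠ 2) (ψ : AddChar K ℂ) (hψ : ψ.IsPrimitive) (t : K) (ht : t ≠ 0) :
    ∑ x, ψ (t * x ^ 2) = ((quadraticChar K t : ℤ) : ℂ) *
      gaussSum ((quadraticChar K).ringHomComp (Int.castRingHom ℂ)) ψ := by
  have h1 : ∑ x, ψ (t * x ^ 2) = ∑ y, (((quadraticChar K y : ℤ) : ℂ) + 1) * ψ (t * y) := by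
    rw [← Finset.sum_fiberwise Finset.univ (fun x : K => x ^ 2)]
    refine Finset.sum_congr rfl fun y _ => ?_
    have := quadraticChar_card_sqrts hK y
    rw [Finset.sum_congr rfl (g := fun _ => ψ (t * y))]
    · rw [Finset.sum_const, nsmul_eq_mul]
      congr 1
      have h2 : ((Finset.univ.filter fun x : K => x ^ 2 = y).card : ℤ) = quadraticChar K y + 1 := by
        rw [← this]; congr 2; ext; simp
      exact_mod_cast congrArg (Int.cast : ℤ → ℂ) h2
    · intro x hx
      rw [(Finset.mem_filter.1 hx).2]
  have h2 : ∑ y, ψ (t * y) = 0 := by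
    have := bb_orth ψ hψ t
    simp only [ht, if_false] at this
    rw [← this]; simp [mul_comm]
  rw [h1]
  simp only [add_mul, Finset.sum_add_distrib, one_mul, h2, add_zero]
  have h3 := gaussSum_mulShift ((quadraticChar K).ringHomComp (Int.castRingHom ℂ)) ψ (Units.mk0 t ht)
  rw [← h3]
  simp only [gaussSum, MulChar.ringHomComp_apply, AddChar.mulShift_apply, Units.val_mk0, ← mul_assoc]
  have h4 : ((quadraticChar K t : ℤ) : ℂ) * ((quadraticChar K t : ℤ) : ℂ) = 1 := by
    have := quadraticChar_sq_one (F := K) ht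
    rw [← sq]; exact_mod_cast congrArg (Int.cast : ℤ → ℂ) this
  simp only [eq_intCast, h4, one_mul]

lemma bb_quad2 (hK : ringChar K ≠ 2) (ψ : AddChar K ℂ) (t b : K) (ht : t ≠ 0) :
    ∑ x, ψ (t * x ^ 2 + x * b) = ψ (- b ^ 2 / (4 * t)) * ∑ x, ψ (t * x ^ 2) := by
  have h2 : (2 : K) ≠ 0 := Ring.two_ne_zero hK
  have h4 : (4 : K) ≠ 0 := by
    have : (4 : K) = 2 * 2 := by norm_num
    rw [this]; exact mul_ne_zero h2 h2
  rw [Finset.mul_sum, ← Equiv.sum_comp (Equiv.addRight (b / (2 * t))) (fun x => ψ (- b ^ 2 / (4 * t)) * ψ (t * x ^ 2))]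
  refine Finset.sum_congr rfl fun x _ => ?_
  rw [← AddChar.map_add_eq_mul]
  congr 1
  simp only [Equiv.coe_addRight]
  field_simp
  ring

lemma bb_quad3 (hK : ringChar K ≠ 2) (ψ : AddChar K ℂ) (hψ : ψ.IsPrimitive) (d : K)
    (hd : ¬ IsSquare d) (t : K) (ht : t ≠ 0) (w : K × K) :
    ∑ z : K × K, ψ (t * (z.1 ^ 2 - d * z.2 ^ 2) + (z.1 * w.2 - z.2 * w.1)) =
      - (Fintype.card K : ℂ) * ψ ((w.1 ^ 2 - d * w.2 ^ 2) / (4 * d) * t⁻¹) := by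
  have hd0 : d ≠ 0 := by rintro rfl; exact hd (IsSquare.zero)
  have h2 : (2 : K) ≠ 0 := Ring.two_ne_zero hK
  have h4 : (4 : K) ≠ 0 := by
    have : (4 : K) = 2 * 2 := by norm_num
    rw [this]; exact mul_ne_zero h2 h2
  have e1 : ∑ z : K × K, ψ (t * (z.1 ^ 2 - d * z.2 ^ 2) + (z.1 * w.2 - z.2 * w.1)) =
      (∑ x, ψ (t * x ^ 2 + x * w.2)) * (∑ y, ψ ((-(t * d)) * y ^ 2 + y * (-w.1))) := by
    rw [Finset.sum_mul_sum, Fintype.sum_prod_type]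
    refine Finset.sum_congr rfl fun x _ => Finset.sum_congr rfl fun y _ => ?_
    rw [← AddChar.map_add_eq_mul]
    congr 1; ring
  have htd : -(t * d) ≠ 0 := neg_ne_zero.2 (mul_ne_zero ht hd0)
  rw [e1, bb_quad2 hK ψ _ _ ht, bb_quad2 hK ψ _ _ htd, bb_quad1 hK ψ hψ _ ht, bb_quad1 hK ψ hψ _ htd]
  have hq1 : (quadraticChar K).ringHomComp (Int.castRingHom ℂ) ≠ 1 := by
    rw [MulChar.ringHomComp_ne_one_iff (Int.castRingHom ℂ).injective_int]
    exact quadraticChar_ne_one hK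
  have hq2 := (quadraticChar_isQuadratic K).comp (Int.castRingHom ℂ)
  have hg := gaussSum_sq hq1 hq2 hψ
  set g := gaussSum ((quadraticChar K).ringHomComp (Int.castRingHom ℂ)) ψ
  have h5 : quadraticChar K (-(t * d)) = - (quadraticChar K (-1) * quadraticChar K t) := by
    have : quadraticChar K d = -1 := quadraticChar_neg_one_iff_not_isSquare.2 hd
    rw [show -(t * d) = (-1) * t * d by ring, map_mul, map_mul, this]; ring
  have h6 : ((quadraticChar K t : ℤ) : ℂ) ^ 2 = 1 := by
    have := quadraticChar_sq_one (F := K) ht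
    exact_mod_cast congrArg (Int.cast : ℤ → ℂ) this
  have h7 : ((quadraticChar K (-1) : ℤ) : ℂ) ^ 2 = 1 := by
    have := quadraticChar_sq_one (F := K) (a := -1) (by simp)
    exact_mod_cast congrArg (Int.cast : ℤ → ℂ) this
  have h8 : ψ ((w.1 ^ 2 - d * w.2 ^ 2) / (4 * d) * t⁻¹) =
     ψ (-w.2 ^ 2 / (4 * t)) * ψ (-(-w.1) ^ 2 / (4 * -(t * d))) := by
    rw [← AddChar.map_add_eq_mul]
    congr 1; field_simp; ring
  rw [h8, h5]
  simp only [MulChar.ringHomComp_apply, eq_intCast] at hg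
  push_cast
  linear_combination (-(ψ (-w.2 ^ 2 / (4 * t)) * ψ (-(-w.1) ^ 2 / (4 * -(t * d))))) *
    (((quadraticChar K (-1) : ℤ) : ℂ) * ((quadraticChar K t : ℤ) : ℂ)^2 * hg + (Fintype.card K : ℂ) * ((quadraticChar K t : ℤ) : ℂ)^2 * h7 + (Fintype.card K : ℂ) * h6)


lemma bb_T0 (ψ : AddChar K ℂ) (hψ : ψ.IsPrimitive) (w : K × K) :
    ∑ z : K × K, ψ (z.1 * w.2 - z.2 * w.1) = if w = 0 then (Fintype.card K : ℂ) ^ 2 else 0 := by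
  have e1 : ∑ z : K × K, ψ (z.1 * w.2 - z.2 * w.1) = (∑ x, ψ (x * w.2)) * (∑ y, ψ (y * (-w.1))) := by
    rw [Finset.sum_mul_sum, Fintype.sum_prod_type]
    refine Finset.sum_congr rfl fun x _ => Finset.sum_congr rfl fun y _ => ?_
    rw [← AddChar.map_add_eq_mul]
    congr 1; ring
  rw [e1, bb_orth ψ hψ, bb_orth ψ hψ]
  by_cases h1 : w.1 = 0 <;> by_cases h2 : w.2 = 0 <;> simp [h1, h2, Prod.ext_iff] ; ring

lemma bb_aniso (d : K) (hd : ¬ IsSquare d) (z : K × K) : z.1 ^ 2 - d * z.2 ^ 2 = 0 ↔ z = 0 := by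
  constructor
  · intro h
    have h2 : z.2 = 0 := by
      by_contra h2
      apply hd
      refine ⟨z.1 / z.2, ?_⟩
      field_simp
      linear_combination -h
    have h1 : z.1 = 0 := by
      rw [h2] at h
      simpa using h
    exact Prod.ext h1 h2
  · rintro rfl; simp

lemma bb_kloos {M q n : ℕ} (hq : Odd q) (hcard : Fintype.card K = q ^ 2) (hM : M ∣ q + 1)
    (ψ : AddChar K ℂ) (hψ : ψ.IsPrimitive) (hψq : ∀ x, ψ (x ^ q) = ψ x)
    (r : K → ZMod M) (hr : ∀ x y, x ≠ 0 → y ≠ 0 → r (x * y) = r x + r y)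
    (hn : ∀ j, (Finset.univ.filter fun c => c ≠ 0 ∧ r c = j).card = n) (v : K) (j : ZMod M) :
    ∑ t ∈ Finset.univ.filter (fun t : K => t ≠ 0),
      ∑ c ∈ Finset.univ.filter (fun c => c ≠ 0 ∧ r c = j), ψ (-(t * c)) * ψ (v * t⁻¹) =
    (if v ≠ 0 ∧ r v = - j then (Fintype.card K : ℂ) else 0) - n := by
  have hr1 : r 1 = 0 := by simpa using hr 1 1 one_ne_zero one_ne_zero
  have hpow : ∀ x, x ≠ 0 → ∀ k : ℕ, r (x ^ k) = k * r x := by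
    intro x hx k
    induction k with
    | zero => simp [hr1]
    | succ k ih => rw [pow_succ, hr _ _ (pow_ne_zero _ hx) hx, ih]; push_cast; ring
  have hq1 : (q : ZMod M) = -1 := by
    have : ((q + 1 : ℕ) : ZMod M) = 0 := (ZMod.natCast_eq_zero_iff _ _).2 hM
    push_cast at this
    linear_combination this
  have hqq : ∀ x : K, (x ^ q) ^ q = x := by
    intro x
    rw [← pow_mul, ← sq, ← hcard, FiniteField.pow_card]
  have hq0 : q ≠ 0 := by rintro rfl; simp at hq
  have hinj : Function.Injective (fun x : K => x ^ q) := by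
    intro x y h
    rw [← hqq x, ← hqq y]
    simp only at h
    rw [h]
  have key : ∀ t ∈ Finset.univ.filter (fun t : K => t ≠ 0),
      ∑ c ∈ Finset.univ.filter (fun c => c ≠ 0 ∧ r c = j), ψ (-(t * c)) * ψ (v * t⁻¹) =
      ∑ c ∈ Finset.univ.filter (fun c => c ≠ 0 ∧ r c = r (-1) - j), ψ (t⁻¹ * (c + v)) := by
    intro t ht
    have ht : t ≠ 0 := by simpa using ht
    refine Finset.sum_bij (fun c _ => -1 * (t ^ (q + 1) * c ^ q)) ?_ ?_ ?_ ?_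
    · intro c hc
      simp only [Finset.mem_filter, Finset.mem_univ, true_and] at hc ⊢
      have h1 := pow_ne_zero q hc.1
      have h2 := pow_ne_zero (q + 1) ht
      refine ⟨by simp [hc.1, ht], ?_⟩
      rw [hr _ _ (by simp) (mul_ne_zero h2 h1), hr _ _ h2 h1, hpow _ ht, hpow _ hc.1, hc.2]
      push_cast
      rw [hq1]; ring
    · intro c _ c' _ h
      have h2 := pow_ne_zero (q + 1) ht
      exact hinj (mul_left_cancel₀ h2 (mul_left_cancel₀ (by simp) h))
    · intro c hc
      simp only [Finset.mem_filter, Finset.mem_univ, true_and] at hc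
      have h2 := pow_ne_zero (q + 1) ht
      have hm1 : (-1 : K) ≠ 0 := by simp
      have h3 : -1 * (t ^ (q + 1) * ((-1 * c / t ^ (q + 1)) ^ q) ^ q) = c := by
        rw [hqq]; field_simp
      have h0 : (-1 * c / t ^ (q + 1)) ^ q ≠ 0 := by
        apply pow_ne_zero
        simp [hc.1, ht]
      refine ⟨(-1 * c / t ^ (q + 1)) ^ q, ?_, h3⟩
      simp only [Finset.mem_filter, Finset.mem_univ, true_and]
      refine ⟨h0, ?_⟩
      have h5 := congrArg r h3
      rw [hr _ _ hm1 (mul_ne_zero h2 (pow_ne_zero _ h0)), hr _ _ h2 (pow_ne_zero _ h0), hpow _ ht, hpow _ h0, hc.2] at h5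
      push_cast at h5
      rw [hq1] at h5
      linear_combination -h5
    · intro c hc
      rw [← hψq (-(t * c)), ← AddChar.map_add_eq_mul]
      congr 1
      rw [hq.neg_pow, mul_pow]
      field_simp
      ring
  rw [Finset.sum_congr rfl key, Finset.sum_comm]
  have h9 : ∀ x : K, ∑ t ∈ Finset.univ.filter (fun t : K => t ≠ 0), ψ (t⁻¹ * x) =
      (if x = 0 then (Fintype.card K : ℂ) else 0) - 1 := by
    intro x
    have h1 : ∑ t ∈ Finset.univ.filter (fun t : K => t ≠ 0), ψ (t⁻¹ * x) =
        ∑ t ∈ Finset.univ.filter (fun t : K => t ≠ 0), ψ (t * x) := by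
      refine Finset.sum_nbij' (fun t => t⁻¹) (fun t => t⁻¹) ?_ ?_ ?_ ?_ ?_ <;> simp
    rw [h1, ← bb_orth ψ hψ x, Finset.filter_ne', ← Finset.add_sum_erase Finset.univ _ (Finset.mem_univ (0 : K))]
    simp
  simp only [h9]
  rw [Finset.sum_sub_distrib, Finset.sum_const, hn, nsmul_eq_mul, mul_one]
  congr 1
  simp only [add_eq_zero_iff_eq_neg]
  rw [Finset.sum_ite_eq']
  congr 1
  simp only [Finset.mem_filter, Finset.mem_univ, true_and, neg_ne_zero, eq_iff_iff]
  refine and_congr_right fun hv => ?_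
  rw [show -v = -1 * v by ring, hr _ _ (by simp) hv, sub_eq_add_neg, add_right_inj]

lemma bb_class {M q n : ℕ} (hq : Odd q) (hcard : Fintype.card K = q ^ 2) (hM : M ∣ q + 1)
    (hK : ringChar K ≠ 2)
    (ψ : AddChar K ℂ) (hψ : ψ.IsPrimitive) (hψq : ∀ x, ψ (x ^ q) = ψ x)
    (r : K → ZMod M) (hr : ∀ x y, x ≠ 0 → y ≠ 0 → r (x * y) = r x + r y)
    (hn : ∀ j, (Finset.univ.filter fun c => c ≠ 0 ∧ r c = j).card = n)
    (d : K) (hd : ¬ IsSquare d) (w : K × K) (j : ZMod M) :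
    ∑ z : K × K, ψ (z.1 * w.2 - z.2 * w.1) *
      (if z ≠ 0 ∧ r (z.1 ^ 2 - d * z.2 ^ 2) = j then 1 else 0) =
    (if w = 0 then (n : ℂ) * Fintype.card K else 0) + n
    - (if w ≠ 0 ∧ r ((w.1 ^ 2 - d * w.2 ^ 2) / (4 * d)) = - j then (Fintype.card K : ℂ) else 0) := by
  have hd0 : d ≠ 0 := by rintro rfl; exact hd (IsSquare.zero)
  have h2 : (2 : K) ≠ 0 := Ring.two_ne_zero hK
  have h4 : (4 : K) ≠ 0 := by
    have : (4 : K) = 2 * 2 := by norm_num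
    rw [this]; exact mul_ne_zero h2 h2
  have hu : (Fintype.card K : ℂ) ≠ 0 := by
    exact_mod_cast Fintype.card_ne_zero
  apply mul_left_cancel₀ hu
  set S := Finset.univ.filter (fun c => c ≠ 0 ∧ r c = j) with hS
  have h1 : ∀ z : K × K, (Fintype.card K : ℂ) *
      (if z ≠ 0 ∧ r (z.1 ^ 2 - d * z.2 ^ 2) = j then 1 else 0) =
      ∑ c ∈ S, ∑ t, ψ (t * (z.1 ^ 2 - d * z.2 ^ 2 - c)) := by
    intro z
    simp only [bb_orth ψ hψ, sub_eq_zero]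
    rw [Finset.sum_ite_eq]
    simp only [hS, Finset.mem_filter, Finset.mem_univ, true_and, mul_ite, mul_one, mul_zero, ne_eq,
      bb_aniso d hd]
  have e1 : (Fintype.card K : ℂ) * ∑ z : K × K, ψ (z.1 * w.2 - z.2 * w.1) *
      (if z ≠ 0 ∧ r (z.1 ^ 2 - d * z.2 ^ 2) = j then 1 else 0) =
      ∑ t, ∑ c ∈ S, ψ (-(t * c)) *
        ∑ z : K × K, ψ (t * (z.1 ^ 2 - d * z.2 ^ 2) + (z.1 * w.2 - z.2 * w.1)) := by
    rw [Finset.mul_sum]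
    have : ∀ z : K × K, (Fintype.card K : ℂ) * (ψ (z.1 * w.2 - z.2 * w.1) *
      (if z ≠ 0 ∧ r (z.1 ^ 2 - d * z.2 ^ 2) = j then 1 else 0)) =
       ∑ c ∈ S, ∑ t, ψ (-(t * c)) * ψ (t * (z.1 ^ 2 - d * z.2 ^ 2) + (z.1 * w.2 - z.2 * w.1)) := by
      intro z
      rw [mul_left_comm, h1, Finset.mul_sum]
      refine Finset.sum_congr rfl fun c _ => ?_
      rw [Finset.mul_sum]
      refine Finset.sum_congr rfl fun t _ => ?_
      rw [← AddChar.map_add_eq_mul, ← AddChar.map_add_eq_mul]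
      congr 1; ring
    simp only [this, Finset.mul_sum]
    rw [Finset.sum_comm, Finset.sum_comm (s := Finset.univ) (t := S)]
    refine Finset.sum_congr rfl fun c _ => ?_
    rw [Finset.sum_comm]
  rw [e1, ← Finset.add_sum_erase Finset.univ _ (Finset.mem_univ (0 : K)), ← Finset.filter_ne']
  have e2 : ∑ t ∈ Finset.univ.filter (fun t : K => t ≠ 0), ∑ c ∈ S, ψ (-(t * c)) *
        ∑ z : K × K, ψ (t * (z.1 ^ 2 - d * z.2 ^ 2) + (z.1 * w.2 - z.2 * w.1)) =
      - (Fintype.card K : ℂ) * ∑ t ∈ Finset.univ.filter (fun t : K => t ≠ 0), ∑ c ∈ S,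
        ψ (-(t * c)) * ψ ((w.1 ^ 2 - d * w.2 ^ 2) / (4 * d) * t⁻¹) := by
    rw [Finset.mul_sum]
    refine Finset.sum_congr rfl fun t ht => ?_
    have ht : t ≠ 0 := by simpa using ht
    rw [bb_quad3 hK ψ hψ d hd t ht, Finset.mul_sum]
    refine Finset.sum_congr rfl fun c _ => ?_
    ring
  rw [e2, hS, bb_kloos hq hcard hM ψ hψ hψq r hr hn]
  have h10 : ((w.1 ^ 2 - d * w.2 ^ 2) / (4 * d) ≠ 0) ↔ w ≠ 0 := by
    rw [ne_eq, div_eq_zero_iff, bb_aniso d hd]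
    simp [h4, hd0]
  simp only [h10, zero_mul, neg_zero, AddChar.map_zero_eq_one, one_mul, zero_add, bb_T0 ψ hψ]
  rw [Finset.sum_const, hn, nsmul_eq_mul]
  split_ifs <;> ring

end quad


lemma bb_exists_r (K : Type*) [Field K] [Fintype K] (M : ℕ) (hM : M ∣ Fintype.card K - 1)
    (hM0 : M ≠ 0) :
    ∃ (r : K → ZMod M) (n : ℕ), (∀ x y, x ≠ 0 → y ≠ 0 → r (x * y) = r x + r y) ∧
      (∀ j, (Finset.univ.filter fun c => c ≠ 0 ∧ r c = j).card = n) ∧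
      (∀ j, ∃ x, x ≠ 0 ∧ r x = j) := by
  haveI : NeZero M := ⟨hM0⟩
  have hcyc : IsCyclic Kˣ := inferInstance
  have hc : M ∣ Nat.card Kˣ := by rw [Nat.card_eq_fintype_card, Fintype.card_units]; exact hM
  let f := (zmodCyclicMulEquiv hcyc).symm
  let g : Kˣ → ZMod M := fun x => ZMod.castHom hc (ZMod M) (f x).toAdd
  have hg : ∀ x y, g (x * y) = g x + g y := by
    intro x y; simp only [g, map_mul, toAdd_mul, map_add]
  have hs : Function.Surjective g := by
    intro j
    obtain ⟨k, hk⟩ := ZMod.ringHom_surjective (ZMod.castHom hc (ZMod M)) j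
    exact ⟨f.symm (Multiplicative.ofAdd k), by simp [g, ← hk]⟩
  let r : K → ZMod M := fun x => if h : x = 0 then 0 else g (Units.mk0 x h)
  have hr : ∀ x y, x ≠ 0 → y ≠ 0 → r (x * y) = r x + r y := by
    intro x y hx hy
    simp only [r, hx, hy, mul_eq_zero, or_self, dif_neg, not_false_eq_true]
    rw [← hg, Units.mk0_mul]
  have hsr : ∀ j, ∃ x, x ≠ 0 ∧ r x = j := by
    intro j
    obtain ⟨x, hx⟩ := hs j
    exact ⟨x, x.ne_zero, by simp [r, hx]⟩
  refine ⟨r, (Finset.univ.filter fun c => c ≠ 0 ∧ r c = 0).card, hr, ?_, hsr⟩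
  intro j
  obtain ⟨a, ha, haj⟩ := hsr j
  symm
  refine Finset.card_bij (fun c _ => c * a) ?_ ?_ ?_
  · intro c hc
    simp only [Finset.mem_filter, Finset.mem_univ, true_and] at hc ⊢
    exact ⟨mul_ne_zero hc.1 ha, by rw [hr _ _ hc.1 ha, hc.2, haj, zero_add]⟩
  · intro c _ c' _ h
    exact mul_right_cancel₀ ha h
  · intro c hc
    simp only [Finset.mem_filter, Finset.mem_univ, true_and] at hc
    refine ⟨c / a, ?_, by field_simp⟩
    simp only [Finset.mem_filter, Finset.mem_univ, true_and]
    have h0 : c / a ≠ 0 := div_ne_zero hc.1 ha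
    refine ⟨h0, ?_⟩
    have := hr (c / a) a h0 ha
    rw [div_mul_cancel₀ _ ha, hc.2, haj] at this
    simpa using this

lemma bb_exists_psi (K : Type*) [Field K] [Fintype K] (p : ℕ) [Fact p.Prime] [CharP K p] :
    ∃ ψ : AddChar K ℂ, ψ.IsPrimitive ∧ ∀ x n, ψ (x ^ p ^ n) = ψ x := by
  letI : Algebra (ZMod p) K := ZMod.algebra K p
  have hp : p ≠ 0 := (Fact.out : p.Prime).ne_zero
  haveI : NeZero p := ⟨hp⟩
  have hz := Complex.isPrimitiveRoot_exp p hp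
  let χ := AddChar.zmodChar p ((IsPrimitiveRoot.iff_def _ p).mp hz).left
  have hχ : χ.IsPrimitive := AddChar.zmodChar_primitive_of_primitive_root p hz
  let ψ : AddChar K ℂ := χ.compAddMonoidHom (Algebra.trace (ZMod p) K).toAddMonoidHom
  refine ⟨ψ, ?_, ?_⟩
  · apply AddChar.IsPrimitive.of_ne_one
    intro h
    obtain ⟨a, ha⟩ := Algebra.trace_surjective (ZMod p) K 1
    have h1 : χ 1 = 1 := by
      have := DFunLike.congr_fun h a
      simpa [ψ, ha] using this
    have := (AddChar.IsPrimitive.zmod_char_eq_one_iff p hχ 1).1 h1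
    exact one_ne_zero this
  · intro x n
    have h1 : ∀ x, ψ (x ^ p) = ψ x := by
      intro x
      have := Algebra.trace_eq_of_algEquiv (FiniteField.frobeniusAlgEquivOfAlgebraic (ZMod p) K) x
      simp only [FiniteField.coe_frobeniusAlgEquivOfAlgebraic, ZMod.card] at this
      simp only [ψ, AddChar.compAddMonoidHom_apply, LinearMap.toAddMonoidHom_coe, this]
    induction n with
    | zero => simp
    | succ n ih => rw [pow_succ, pow_mul, h1, ih]

lemma bb_half {m : ℕ} [NeZero m] {A : Type*} [CommRing A] (τ : AddChar (ZMod m) A)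
    (hτ : ∑ t, τ t = 0) :
    (∑ k ∈ Finset.range m, τ (k : ZMod m) = 0) ∧
    ∃ p : ZMod (2 * m) → Prop, (∀ x y, p (x + y) ↔ (p x ↔ p y)) ∧ ¬ p 1 ∧
    ∀ j,
    (p j → (∃ t, τ t = ∑ k ∈ Finset.range m, if j = 2 * k then τ (k : ZMod m) else 0) ∧
        (∑ k ∈ Finset.range m, if j = 2 * k + 1 then τ (k : ZMod m) else 0) = 0) ∧
    (¬ p j → (∃ t, τ t = ∑ k ∈ Finset.range m, if j = 2 * k + 1 then τ (k : ZMod m) else 0) ∧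
        (∑ k ∈ Finset.range m, if j = 2 * k then τ (k : ZMod m) else 0) = 0) := by
  have hm : m ≠ 0 := NeZero.ne m
  constructor
  · rw [← hτ]
    refine Finset.sum_bij' (fun k _ => (k : ZMod m)) (fun t _ => t.val) ?_ ?_ ?_ ?_ ?_
    · simp
    · intro t _; simpa using ZMod.val_lt t
    · intro k hk; exact ZMod.val_cast_of_lt (by simpa using hk)
    · intro t _; simp
    · simp
  let c := ZMod.castHom (dvd_mul_right 2 m) (ZMod 2)
  have inj : ∀ a b : ℕ, a < 2 * m → b < 2 * m → ((a : ZMod (2 * m)) = b ↔ a = b) := by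
    intro a b ha hb
    rw [ZMod.natCast_eq_natCast_iff']
    rw [Nat.mod_eq_of_lt ha, Nat.mod_eq_of_lt hb]
  refine ⟨fun x => c x = 0, ?_, ?_, ?_⟩
  · intro x y
    show c (x + y) = 0 ↔ (c x = 0 ↔ c y = 0)
    rw [map_add]
    generalize c x = a
    generalize c y = b
    revert a b; decide
  · simp
  · intro j
    have hj : ((j.val : ℕ) : ZMod (2 * m)) = j := ZMod.natCast_zmod_val j
    have hlt : j.val < 2 * m := ZMod.val_lt j
    have hcj : c j = 0 ↔ j.val % 2 = 0 := by
      rw [← hj, map_natCast, ZMod.natCast_eq_zero_iff, hj]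
      omega
    have e1 : ∀ k ∈ Finset.range m, (j = 2 * (k : ZMod (2 * m)) ↔ j.val = 2 * k) := by
      intro k hk
      have := inj j.val (2 * k) hlt (by simp at hk; omega)
      rw [← this, hj]; push_cast; rfl
    have e2 : ∀ k ∈ Finset.range m, (j = 2 * (k : ZMod (2 * m)) + 1 ↔ j.val = 2 * k + 1) := by
      intro k hk
      have := inj j.val (2 * k + 1) hlt (by simp at hk; omega)
      rw [← this, hj]; push_cast; rfl
    show (c j = 0 → _) ∧ (¬ c j = 0 → _)
    rw [hcj]
    constructor
    · intro h
      constructor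
      · refine ⟨((j.val / 2 : ℕ) : ZMod m), ?_⟩
        rw [Finset.sum_eq_single_of_mem (j.val / 2) (by simp; omega)]
        · rw [if_pos ((e1 _ (by simp; omega)).2 (by omega))]
        · intro k hk hne
          rw [if_neg]; rw [e1 k hk]; omega
      · apply Finset.sum_eq_zero
        intro k hk
        rw [if_neg]; rw [e2 k hk]; omega
    · intro h
      constructor
      · refine ⟨((j.val / 2 : ℕ) : ZMod m), ?_⟩
        rw [Finset.sum_eq_single_of_mem (j.val / 2) (by simp; omega)]
        · rw [if_pos ((e2 _ (by simp; omega)).2 (by omega))]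
        · intro k hk hne
          rw [if_neg]; rw [e2 k hk]; omega
      · apply Finset.sum_eq_zero
        intro k hk
        rw [if_neg]; rw [e1 k hk]; omega



section base
variable {K : Type*} [Field K] [Fintype K]

def bbOn : Option K → K × K → Prop
  | none, z => z.2 = 0
  | some s, z => z.1 = s * z.2

def bbQ (d : K) : Option K → K
  | none => 1
  | some s => s ^ 2 - d

lemma bb_line (ψ : AddChar K ℂ) (hψ : ψ.IsPrimitive) (l : Option K) (w : K × K) :
    ∑ z : K × K, ψ (z.1 * w.2 - z.2 * w.1) * (if bbOn l z then 1 else 0)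
      = if bbOn l w then (Fintype.card K : ℂ) else 0 := by
  cases l with
  | none =>
    have h : ∀ z : K × K, bbOn none z ↔ z.2 = 0 := fun _ => Iff.rfl
    simp only [h]
    rw [Fintype.sum_prod_type]
    simp only [mul_ite, mul_one, mul_zero, Finset.sum_ite_eq', Finset.mem_univ, if_true, zero_mul,
      sub_zero]
    exact bb_orth ψ hψ _
  | some s =>
    have h : ∀ z : K × K, bbOn (some s) z ↔ z.1 = s * z.2 := fun _ => Iff.rfl
    have h' : w.1 = s * w.2 ↔ s * w.2 - w.1 = 0 :=
      ⟨fun h => by rw [h, sub_self], fun h => (sub_eq_zero.1 h).symm⟩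
    simp only [h]
    simp only [h']
    rw [Fintype.sum_prod_type_right]
    simp only [mul_ite, mul_one, mul_zero, Finset.sum_ite_eq', Finset.mem_univ, if_true]
    have := bb_orth ψ hψ (s * w.2 - w.1)
    rw [← this]
    refine Finset.sum_congr rfl fun x _ => ?_
    congr 1; ring

lemma bb_four_gen {A : Type*} [CommRing A] [Algebra ℂ A] {X ι : Type*} [Fintype X] (T : Finset ι)
    (e : X → ℂ) (P : ι → X → Prop) [∀ i z, Decidable (P i z)] (v : ι → A) :
    ∑ z, e z • (∑ i ∈ T, if P i z then v i else 0) =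
      ∑ i ∈ T, (∑ z, e z * (if P i z then 1 else 0)) • v i := by
  simp only [Finset.smul_sum, Finset.sum_smul]
  rw [Finset.sum_comm]
  refine Finset.sum_congr rfl fun i _ => Finset.sum_congr rfl fun z _ => ?_
  split_ifs <;> simp

lemma bb_afour {m : ℕ} {A : Type*} [CommRing A] [Algebra ℂ A] (τ : AddChar (ZMod m) A)
    (ψ : AddChar K ℂ) (hψ : ψ.IsPrimitive) (P : Option K → Prop) (lab : Option K → ZMod m)
    (w : K × K) :
    ∑ z : K × K, ψ (z.1 * w.2 - z.2 * w.1) • (∑ l, if P l ∧ bbOn l z then τ (lab l) else 0)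
      = (Fintype.card K : ℂ) • (∑ l, if P l ∧ bbOn l w then τ (lab l) else 0) := by
  rw [bb_four_gen Finset.univ (fun z : K × K => ψ (z.1 * w.2 - z.2 * w.1))
    (fun l z => P l ∧ bbOn l z) (fun l => τ (lab l)), Finset.smul_sum]
  refine Finset.sum_congr rfl fun l _ => ?_
  by_cases h : P l
  · simp only [h, true_and]
    rw [bb_line ψ hψ]
    split_ifs <;> simp
  · simp [h]

lemma bb_bfour {m : ℕ} {A : Type*} [CommRing A] [Algebra ℂ A] (τ : AddChar (ZMod m) A)
    (hτ : ∑ k ∈ Finset.range m, τ (k : ZMod m) = 0)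
    {M q n : ℕ} (hq : Odd q) (hcard : Fintype.card K = q ^ 2) (hM : M ∣ q + 1)
    (hK : ringChar K ≠ 2)
    (ψ : AddChar K ℂ) (hψ : ψ.IsPrimitive) (hψq : ∀ x, ψ (x ^ q) = ψ x)
    (r : K → ZMod M) (hr : ∀ x y, x ≠ 0 → y ≠ 0 → r (x * y) = r x + r y)
    (hn : ∀ j, (Finset.univ.filter fun c => c ≠ 0 ∧ r c = j).card = n)
    (d : K) (hd : ¬ IsSquare d) (w : K × K) (f : ℕ → ZMod M) :
    ∑ z : K × K, ψ (z.1 * w.2 - z.2 * w.1) •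
      (∑ k ∈ Finset.range m, if z ≠ 0 ∧ r (z.1 ^ 2 - d * z.2 ^ 2) = f k then τ (k : ZMod m) else 0)
      = (-(Fintype.card K : ℂ)) •
      (∑ k ∈ Finset.range m, if w ≠ 0 ∧ - r ((w.1 ^ 2 - d * w.2 ^ 2) / (4 * d)) = f k
        then τ (k : ZMod m) else 0) := by
  rw [bb_four_gen (Finset.range m) (fun z : K × K => ψ (z.1 * w.2 - z.2 * w.1))
    (fun k z => z ≠ 0 ∧ r (z.1 ^ 2 - d * z.2 ^ 2) = f k) (fun k => τ (k : ZMod m))]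
  simp only [bb_class hq hcard hM hK ψ hψ hψq r hr hn d hd w, sub_smul, Finset.sum_sub_distrib]
  rw [← Finset.smul_sum, hτ, smul_zero, zero_sub, ← Finset.sum_neg_distrib, Finset.smul_sum]
  refine Finset.sum_congr rfl fun k _ => ?_
  have e : ∀ a : ZMod M, (a = - f k ↔ - a = f k) := fun a => by rw [neg_eq_iff_eq_neg]
  simp only [e]
  split_ifs <;> simp

lemma bb_onuniq (d : K) (z : K × K) (hz : z ≠ 0) :
    ∃ l0 : Option K, ∃ x : K, x ≠ 0 ∧ (∀ l, bbOn l z ↔ l = l0) ∧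
      z.1 ^ 2 - d * z.2 ^ 2 = x * x * bbQ d l0 := by
  by_cases h : z.2 = 0
  · have h1 : z.1 ≠ 0 := fun h1 => hz (Prod.ext h1 h)
    refine ⟨none, z.1, h1, ?_, ?_⟩
    · intro l
      cases l with
      | none => simp [bbOn, h]
      | some s => simp [bbOn, h, h1]
    · simp [bbQ, h]; ring
  · refine ⟨some (z.1 / z.2), z.2, h, ?_, ?_⟩
    · intro l
      cases l with
      | none => simp [bbOn, h]
      | some s =>
        simp only [bbOn, Option.some.injEq]
        rw [eq_div_iff h]; exact eq_comm
    · simp only [bbQ]; field_simp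

noncomputable def bbSig (d : K) : Option K → Option K
  | none => some 0
  | some s => if s = 0 then none else some (d / s)

lemma bb_sig_inv (d : K) (hd : d ≠ 0) : Function.Involutive (bbSig d) := by
  intro l
  cases l with
  | none => simp [bbSig]
  | some s =>
    by_cases h : s = 0
    · simp [bbSig, h]
    · simp [bbSig, h, hd]

lemma bb_base {m : ℕ} [NeZero m] {A : Type*} [CommRing A] [Algebra ℂ A] (τ : AddChar (ZMod m) A)
    (hτ : ∑ t, τ t = 0)
    {p n : ℕ} [Fact p.Prime] [CharP K p] (hcard : Fintype.card K = (p ^ n) ^ 2)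
    (hM : 2 * m ∣ p ^ n + 1) : Nonempty (BB τ (K × K) ((p ^ n) ^ 2)) := by
  have hm : m ≠ 0 := NeZero.ne m
  obtain ⟨ψ, hψ, hψp⟩ := bb_exists_psi K p
  have hψq : ∀ x, ψ (x ^ p ^ n) = ψ x := fun x => hψp x n
  generalize hq' : p ^ n = q at *
  obtain ⟨t, ht⟩ := hM
  have hq : Odd q := by
    rw [← Nat.not_even_iff_odd]
    rintro ⟨a, ha⟩
    have : 2 * (m * t) = a + a + 1 := by rw [← mul_assoc, ← ht, ha]
    omega
  have hM : 2 * m ∣ q + 1 := ⟨t, ht⟩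
  have hq1 : 1 ≤ q := hq.pos
  have hcardodd : Odd (Fintype.card K) := by rw [hcard]; exact hq.pow
  have hK : ringChar K ≠ 2 := by
    intro h
    have := FiniteField.even_card_iff_char_two.1 h
    rw [Nat.odd_iff] at hcardodd; omega
  have hsub : Fintype.card K - 1 = (q + 1) * (q - 1) := by
    rw [hcard]; obtain ⟨a, rfl⟩ := Nat.exists_eq_add_of_le hq1
    simp; ring_nf; omega
  obtain ⟨r, N, hr, hN, hsur⟩ := bb_exists_r K (2 * m) (hsub ▸ Dvd.dvd.mul_right hM _) (by omega)
  obtain ⟨hτr, P, hP, hP1, hPj⟩ := bb_half τ hτ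
  obtain ⟨d, hd0, hd1⟩ := hsur 1
  have hr1 : r 1 = 0 := by
    have := hr 1 1 one_ne_zero one_ne_zero
    simpa using this
  have hP0 : P 0 := by have := hP 0 0; simpa using this
  have hPn : ∀ x, P (-x) ↔ P x := by
    intro x; have := hP x (-x); simp [hP0] at this; exact this.symm
  have hsq : ∀ x, x ≠ 0 → P (r (x * x)) := by
    intro x hx; rw [hr x x hx hx, hP]
  have hpd : ¬ P (r d) := by rw [hd1]; exact hP1
  have hd : ¬ IsSquare d := by
    rintro ⟨x, rfl⟩
    exact hpd (hsq x (by rintro rfl; simp at hd0))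
  have hm1 : P (r (-1)) := by
    have : IsSquare (-1 : K) := by
      rw [FiniteField.isSquare_neg_one_iff, hcard, Nat.pow_mod]
      have : q % 4 < 4 := Nat.mod_lt _ (by norm_num)
      interval_cases q % 4 <;> simp
    obtain ⟨x, hx⟩ := this
    rw [hx]; apply hsq
    rintro rfl; simp at hx
  have h2 : (2 : K) ≠ 0 := Ring.two_ne_zero hK
  have h4 : (4 : K) ≠ 0 := by
    have : (4 : K) = 2 * 2 := by norm_num
    rw [this]; exact mul_ne_zero h2 h2
  have hQl : ∀ l, bbQ d l ≠ 0 := by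
    intro l
    cases l with
    | none => simp [bbQ]
    | some s =>
      simp only [bbQ]
      intro h
      exact hd ⟨s, by rw [← sub_eq_zero.1 h]; ring⟩
  have hsw : ∀ l, P (r (bbQ d (bbSig d l))) ↔ ¬ P (r (bbQ d l)) := by
    have hnd : ¬ P (r (-d)) := by
      rw [← neg_one_mul, hr _ _ (by simp) hd0, hP]
      simp [hm1, hpd]
    intro l
    cases l with
    | none => simp [bbSig, bbQ, hr1, hP0, hnd]
    | some s =>
      by_cases h : s = 0
      · simp [bbSig, bbQ, hr1, hP0, hnd, h]
      · have e : bbQ d (bbSig d (some s)) = (-d) * ((s⁻¹ * s⁻¹) * bbQ d (some s)) := by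
          simp only [bbSig, bbQ, h, if_false]; field_simp; ring
        have hsi : s⁻¹ ≠ 0 := inv_ne_zero h
        rw [e, hr _ _ (neg_ne_zero.2 hd0) (mul_ne_zero (mul_ne_zero hsi hsi) (hQl _)),
          hr _ _ (mul_ne_zero hsi hsi) (hQl _), hP, hP]
        simp [hnd, hsq _ hsi]
  set PE : Option K → Prop := fun l => P (r (bbQ d l)) with hPE
  have hcnt : (Finset.univ.filter fun l => PE l).card = (Finset.univ.filter fun l => ¬ PE l).card := by
    refine Finset.card_bij (fun l _ => bbSig d l) ?_ ?_ ?_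
    · intro l hl
      simp only [Finset.mem_filter, Finset.mem_univ, true_and] at hl ⊢
      simpa [hPE, hsw] using hl
    · intro a _ b _ h; exact (bb_sig_inv d hd0).injective h
    · intro l hl
      simp only [Finset.mem_filter, Finset.mem_univ, true_and] at hl
      refine ⟨bbSig d l, ?_, bb_sig_inv d hd0 l⟩
      simp only [Finset.mem_filter, Finset.mem_univ, true_and]
      exact (hsw l).2 hl
  obtain ⟨PO, hPO⟩ : ∃ PO : Option K → Prop, ∀ l, PO l ↔ ¬ PE l := ⟨fun l => ¬ PE l, fun _ => Iff.rfl⟩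
  simp only [← hPO] at hcnt
  have htot := Finset.card_filter_add_card_filter_not (s := (Finset.univ : Finset (Option K))) PE
  rw [Finset.card_univ, Fintype.card_option, hcard] at htot
  simp only [← hPO] at htot
  rw [← hcnt] at htot
  have hcE : (Finset.univ.filter fun l => PE l).card = (t * (q - 1)) * m + 1 := by
    obtain ⟨a, rfl⟩ := Nat.exists_eq_add_of_le hq1
    have : (1 + a) ^ 2 + 1 = 2 * (t * a * m + 1) := by
      have : (1 + a) ^ 2 + 1 = (1 + a + 1) * a + 2 := by ring
      rw [this, ht]; ring
    simp only [Nat.add_sub_cancel_left]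
    have h3 : (Finset.univ.filter fun l => PE l).card + (Finset.univ.filter fun l => PE l).card
      = (1 + a) ^ 2 + 1 := by convert htot
    omega
  have hcO : (Finset.univ.filter fun l => PO l).card = (t * (q - 1)) * m + 1 := by
    rw [← hcnt, hcE]
  obtain ⟨labE, hlabE⟩ := bb_lab_exists τ hτ _ _ hcE
  obtain ⟨labO, hlabO⟩ := bb_lab_exists τ hτ _ _ hcO
  rw [Finset.sum_filter] at hlabE hlabO
  have hneg : ∀ l (z : K × K), bbOn l (-z) ↔ bbOn l z := by
    intro l z
    cases l <;> simp [bbOn]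
  have hon0 : ∀ l : Option K, bbOn l 0 := by intro l; cases l <;> simp [bbOn]
  have hcc : (Fintype.card K : ℂ) = ((q ^ 2 : ℕ) : ℂ) := by rw [hcard]
  have key : ∀ z : K × K, z ≠ 0 → ∃ l0, (∀ l, bbOn l z ↔ l = l0) ∧
      (P (r (z.1 ^ 2 - d * z.2 ^ 2)) ↔ PE l0) ∧
      (P (- r ((z.1 ^ 2 - d * z.2 ^ 2) / (4 * d))) ↔ ¬ PE l0) := by
    intro z hz
    obtain ⟨l0, x, hx, h1, h2'⟩ := bb_onuniq d z hz
    have hA : P (r (z.1 ^ 2 - d * z.2 ^ 2)) ↔ PE l0 := by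
      rw [h2', hr _ _ (mul_ne_zero hx hx) (hQl _), hP]
      simp [hsq x hx, hPE]
    refine ⟨l0, h1, hA, ?_⟩
    rw [← hA, hPn]
    have hQ0 : z.1 ^ 2 - d * z.2 ^ 2 ≠ 0 := fun h => hz ((bb_aniso d hd z).1 h)
    have h4d : 4 * d ≠ 0 := mul_ne_zero h4 hd0
    have := hr ((z.1 ^ 2 - d * z.2 ^ 2) / (4 * d)) (4 * d) (div_ne_zero hQ0 h4d) h4d
    rw [div_mul_cancel₀ _ h4d] at this
    have hp4 : ¬ P (r (4 * d)) := by
      rw [hr _ _ h4 hd0, hP, show (4 : K) = 2 * 2 by norm_num]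
      simp [hsq 2 h2, hpd]
    rw [this, hP]
    simp [hp4]
  have hE : ∀ z : K × K, ∀ l0, (∀ l, bbOn l z ↔ l = l0) → ∀ (R : Option K → Prop)
      (lab : Option K → ZMod m),
      (∑ l, if R l ∧ bbOn l z then τ (lab l) else 0) = if R l0 then τ (lab l0) else 0 := by
    intro z l0 h R lab
    rw [Finset.sum_eq_single_of_mem l0 (Finset.mem_univ _)]
    · simp [h]
    · intro l _ hl; simp [h, hl]
  refine ⟨{
    e := fun z w => ψ (z.1 * w.2 - z.2 * w.1)
    add := ?_
    zero := ?_
    orth := ?_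
    orth' := ?_
    aE := fun z => ∑ l, if PE l ∧ bbOn l z then τ (labE l) else 0
    aO := fun z => ∑ l, if PO l ∧ bbOn l z then τ (labO l) else 0
    aE' := fun z => ∑ l, if PE l ∧ bbOn l z then τ (labE l) else 0
    aO' := fun z => ∑ l, if PO l ∧ bbOn l z then τ (labO l) else 0
    bE := fun z => ∑ k ∈ Finset.range m,
      if z ≠ 0 ∧ r (z.1 ^ 2 - d * z.2 ^ 2) = 2 * k then τ (k : ZMod m) else 0
    bO := fun z => ∑ k ∈ Finset.range m,
      if z ≠ 0 ∧ r (z.1 ^ 2 - d * z.2 ^ 2) = 2 * k + 1 then τ (k : ZMod m) else 0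
    bE' := fun w => ∑ k ∈ Finset.range m,
      if w ≠ 0 ∧ - r ((w.1 ^ 2 - d * w.2 ^ 2) / (4 * d)) = 2 * k then τ (k : ZMod m) else 0
    bO' := fun w => ∑ k ∈ Finset.range m,
      if w ≠ 0 ∧ - r ((w.1 ^ 2 - d * w.2 ^ 2) / (4 * d)) = 2 * k + 1 then τ (k : ZMod m) else 0
    aE0 := by simpa [hon0] using hlabE
    aO0 := by simpa [hon0] using hlabO
    aE0' := by simpa [hon0] using hlabE
    aO0' := by simpa [hon0] using hlabO
    bE0 := by simp
    bO0 := by simp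
    bE0' := by simp
    bO0' := by simp
    aEn := by intro z; simp only [hneg]
    aOn := by intro z; simp only [hneg]
    bEn := by intro z; simp
    bOn := by intro z; simp
    dich := ?_
    dich' := ?_
    faE := by intro w; rw [← hcc]; exact bb_afour τ ψ hψ _ _ w
    faO := by intro w; rw [← hcc]; exact bb_afour τ ψ hψ _ _ w
    fbE := by
      intro w; rw [← hcc]
      exact bb_bfour τ hτr hq hcard hM hK ψ hψ hψq r hr hN d hd w (fun k => 2 * k)
    fbO := by
      intro w; rw [← hcc]
      exact bb_bfour τ hτr hq hcard hM hK ψ hψ hψq r hr hN d hd w (fun k => 2 * k + 1)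
    }⟩
  · intro x y w
    rw [← AddChar.map_add_eq_mul]; congr 1
    simp only [Prod.fst_add, Prod.snd_add]; ring
  · intro w; simp
  · intro x
    have := bb_T0 ψ hψ (-x)
    rw [← hcc]
    simp only [neg_eq_zero] at this
    convert this using 1
    · refine Finset.sum_congr rfl fun y _ => ?_
      congr 1
      simp only [Prod.fst_neg, Prod.snd_neg]; ring
    · congr
  · intro w
    have := bb_T0 ψ hψ w
    rw [← hcc]; convert this
  · intro z hz
    obtain ⟨l0, h1, h2, h3⟩ := key z hz
    simp only [hE z l0 h1, ne_eq, hz, not_false_eq_true, true_and]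
    by_cases h : PE l0
    · left
      have := (hPj _).1 (h2.2 h)
      simp only [hPO, h, if_true, not_true_eq_false, if_false]
      exact ⟨⟨_, rfl⟩, trivial, this⟩
    · right
      have := (hPj _).2 (fun h' => h (h2.1 h'))
      simp only [hPO, h, if_true, not_false_eq_true, if_false]
      exact ⟨trivial, ⟨_, rfl⟩, this.2, this.1⟩
  · intro z hz
    obtain ⟨l0, h1, h2, h3⟩ := key z hz
    simp only [hE z l0 h1, ne_eq, hz, not_false_eq_true, true_and]
    by_cases h : PE l0
    · left
      have := (hPj _).2 (fun h' => (h3.1 h') h)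
      simp only [hPO, h, if_true, not_true_eq_false, if_false]
      exact ⟨⟨_, rfl⟩, trivial, this⟩
    · right
      have := (hPj _).1 (h3.2 h)
      simp only [hPO, h, if_true, not_false_eq_true, if_false]
      exact ⟨trivial, ⟨_, rfl⟩, this.2, this.1⟩

end base

lemma bb_field {m : ℕ} [NeZero m] {A : Type*} [CommRing A] [Algebra ℂ A] (τ : AddChar (ZMod m) A)
    (hτ : ∑ t, τ t = 0) (q : ℕ) (hq : IsPrimePow q) (hM : 2 * m ∣ q + 1)
    (F : Type*) [Field F] [Fintype F] (hF : Fintype.card F = q ^ 4) :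
    Nonempty (BB τ F (q ^ 2)) := by
  obtain ⟨p, n, hp, hn, rfl⟩ := hq
  have hp := hp.nat_prime
  haveI : Fact p.Prime := ⟨hp⟩
  haveI hch : CharP F p := by
    obtain ⟨p', h'⟩ := CharP.exists F
    obtain ⟨n', hp', hc⟩ := FiniteField.card F p'
    rw [hF, ← pow_mul] at hc
    have : p ∣ p' ^ (n' : ℕ) := hc ▸ dvd_pow_self p (by omega)
    rw [(Nat.prime_dvd_prime_iff_eq hp hp').1 (hp.dvd_of_dvd_pow this)]
    exact h'
  letI : Algebra (ZMod p) F := ZMod.algebra F p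
  let K := GaloisField p (2 * n)
  letI : Fintype K := Fintype.ofFinite K
  have hK : Fintype.card K = (p ^ n) ^ 2 := by
    rw [← Nat.card_eq_fintype_card, GaloisField.card p (2 * n) (by omega), ← pow_mul, mul_comm]
  obtain ⟨X⟩ := bb_base (K := K) τ hτ hK hM
  have h1 := Module.card_eq_pow_finrank (K := ZMod p) (V := F)
  have h2 := Module.card_eq_pow_finrank (K := ZMod p) (V := K × K)
  rw [Fintype.card_prod, hK] at h2
  rw [hF] at h1
  have h3 : Module.finrank (ZMod p) F = Module.finrank (ZMod p) (K × K) := by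
    apply Nat.pow_right_injective (Fintype.one_lt_card (α := ZMod p))
    show _ ^ _ = _ ^ _
    rw [← h1, ← h2]; ring
  exact ⟨X.map (LinearEquiv.ofFinrankEq F (K × K) h3).toAddEquiv⟩


lemma bb_exists_A (m : ℕ) [NeZero m] :
    ∃ (A : Type) (_ : CommRing A) (_ : Algebra ℂ A) (τ : AddChar (ZMod m) A), ∑ t, τ t = 0 ∧
      ∀ S : Finset (ZMod m), ∃ L : A →ₗ[ℂ] ℂ, ∀ t, L (τ t) = (if t ∈ S then 1 else 0) - S.card / m := by
  have hm : (m : ℂ) ≠ 0 := by exact_mod_cast NeZero.ne m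
  let I := {χ : AddChar (ZMod m) ℂ // χ ≠ 1}
  let τ : AddChar (ZMod m) (I → ℂ) :=
    { toFun := fun t χ => χ.1 t
      map_zero_eq_one' := by ext χ; simp
      map_add_eq_mul' := by intro a b; ext χ; simp [AddChar.map_add_eq_mul] }
  refine ⟨I → ℂ, inferInstance, inferInstance, τ, ?_, ?_⟩
  · ext χ
    rw [Finset.sum_apply]
    exact AddChar.sum_eq_zero_of_ne_one χ.2
  · intro S
    refine ⟨∑ s ∈ S, ∑ χ : I, (χ.1 (-s) / (m : ℂ)) • LinearMap.proj χ, ?_⟩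
    intro t
    simp only [LinearMap.sum_apply, LinearMap.smul_apply, LinearMap.proj_apply, smul_eq_mul]
    have h1 : ∀ s : ZMod m, ∑ χ : I, χ.1 (-s) / (m : ℂ) * τ t χ
        = (if t = s then 1 else 0) - 1 / m := by
      intro s
      have h2 := AddChar.sum_apply_eq_ite (t - s)
      rw [← Finset.add_sum_erase _ _ (Finset.mem_univ (1 : AddChar (ZMod m) ℂ))] at h2
      have h3 : ∑ χ : I, χ.1 (-s) / (m : ℂ) * τ t χ
        = (∑ χ ∈ Finset.univ.erase (1 : AddChar (ZMod m) ℂ), χ (t - s)) / m := by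
        rw [Finset.sum_div]
        symm
        rw [Finset.sum_subtype (p := fun χ => χ ≠ 1) _ (by simp)]
        refine Finset.sum_congr rfl fun χ _ => ?_
        show _ = χ.1 (-s) / (m : ℂ) * χ.1 t
        rw [sub_eq_add_neg, AddChar.map_add_eq_mul]; ring
      rw [h3]
      rw [ZMod.card, AddChar.one_apply] at h2
      rw [← eq_sub_iff_add_eq'] at h2
      rw [h2]
      simp only [sub_eq_zero]
      split_ifs
      · field_simp
      · ring
    simp only [h1, Finset.sum_sub_distrib, Finset.sum_ite_eq]
    simp; ring

lemma bb_srg {G : Type*} [AddCommGroup G] [Fintype G] {u : ℕ} (X : BBPair G u) (hu : 2 ≤ u)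
    (D : Finset G) (h0 : 0 ∉ D) (hneg : ∀ g ∈ D, -g ∈ D) (c : ℤ) (f' : G → ℂ)
    (hf' : ∀ w, f' w * f' w = f' w + if w = 0 then (c : ℂ) ^ 2 - c else 0)
    (hF : ∀ w, ∑ z, X.e z w * ((if z ∈ D then 1 else 0) + if z = 0 then (c : ℂ) else 0)
      = u * f' w) :
    ∃ k l μ : ℕ,
          (SimpleGraph.fromRel fun a b : G => a - b ∈ D).IsSRGWith
            (u ^ 2) k l μ ∧
          (k : ℤ) = c * ((u : ℤ) - 1) ∧
          (l : ℤ) = (u : ℤ) + c ^ 2 - 3 * c ∧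
          (μ : ℤ) = c ^ 2 - c := by
  have hu0 : (u : ℂ) ≠ 0 := by exact_mod_cast (by omega : u ≠ 0)
  have hcard : Fintype.card G = u ^ 2 := by
    have := X.orth 0
    simp [X.zero] at this
    exact_mod_cast this
  -- injectivity
  have hinj : ∀ h : G → ℂ, (∀ w, ∑ z, X.e z w * h z = 0) → ∀ x, h x = 0 := by
    intro h hh x
    have e1 : ∑ w, X.e (-x) w * ∑ z, X.e z w * h z = 0 := by simp [hh]
    simp only [Finset.mul_sum] at e1
    rw [Finset.sum_comm] at e1
    have e2 : ∀ z, ∑ w, X.e (-x) w * (X.e z w * h z) = (if z = x then (u : ℂ) ^ 2 else 0) * h z := by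
      intro z
      have := X.orth (-x + z)
      simp only [neg_add_eq_zero] at this
      simp only [← mul_assoc, ← X.add]
      rw [← Finset.sum_mul, this]
      simp only [eq_comm]
    simp only [e2, ite_mul, zero_mul, Finset.sum_ite_eq', Finset.mem_univ, if_true] at e1
    simpa [hu0] using e1
  set f : G → ℂ := fun z => (if z ∈ D then 1 else 0) + if z = 0 then (c : ℂ) else 0 with hf
  have hconv : ∀ g, ∑ x, f (g - x) * f x = u * f g + ((c : ℂ) ^ 2 - c) := by
    intro g
    have := hinj (fun g => ∑ x, f (g - x) * f x - (u * f g + ((c : ℂ) ^ 2 - c))) ?_ g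
    · exact sub_eq_zero.1 this
    intro w
    simp only [mul_sub, mul_add, Finset.sum_sub_distrib, Finset.sum_add_distrib]
    have e1 : ∑ z, X.e z w * ∑ x, f (z - x) * f x = (u * f' w) * (u * f' w) := by
      rw [← hF w, Finset.sum_mul_sum]
      simp only [Finset.mul_sum]
      rw [Finset.sum_comm]
      rw [Finset.sum_comm (f := fun i j => X.e i w * _ * (X.e j w * _))]
      refine Finset.sum_congr rfl fun x _ => ?_
      rw [← Equiv.sum_comp (Equiv.addRight x)]
      refine Finset.sum_congr rfl fun z _ => ?_
      simp only [Equiv.coe_addRight, add_sub_cancel_right, X.add]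
      ring
    have e2 : ∑ z, X.e z w * (u * f z) = u * (u * f' w) := by
      rw [← hF w, Finset.mul_sum]
      refine Finset.sum_congr rfl fun x _ => ?_
      ring
    have e3 : ∀ b : ℂ, ∑ z, X.e z w * b = (if w = 0 then (u : ℂ) ^ 2 else 0) * b := by
      intro b
      rw [← Finset.sum_mul, X.orth']
    rw [e1, e2, e3, e3]
    have e4 := hf' w
    have : ↑u * f' w * (↑u * f' w) = u ^ 2 * (f' w * f' w) := by ring
    rw [this, e4]
    split_ifs <;> ring
  have hD : ∀ g, g ∈ D ↔ -g ∈ D := fun g => ⟨hneg g, fun h => by simpa using hneg _ h⟩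
  have hN : ∀ g, ((Finset.univ.filter fun x => g - x ∈ D ∧ x ∈ D).card : ℤ) =
      (if g ∈ D then (u : ℤ) - 2 * c else 0) + (if g = 0 then u * c - c ^ 2 else 0) + (c ^ 2 - c) := by
    intro g
    have h1 := hconv g
    have h2 : ∑ x, f (g - x) * f x = ((Finset.univ.filter fun x => g - x ∈ D ∧ x ∈ D).card : ℂ)
        + 2 * c * (if g ∈ D then 1 else 0) + (if g = 0 then (c : ℂ) ^ 2 else 0) := by
      simp only [hf, add_mul, mul_add, Finset.sum_add_distrib]
      have a1 : ∑ x, (if g - x ∈ D then (1 : ℂ) else 0) * (if x ∈ D then 1 else 0)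
          = ((Finset.univ.filter fun x => g - x ∈ D ∧ x ∈ D).card : ℂ) := by
        rw [Finset.card_filter]
        push_cast
        refine Finset.sum_congr rfl fun x _ => ?_
        by_cases h : g - x ∈ D <;> by_cases h' : x ∈ D <;> simp [h, h']
      have a2 : ∑ x, (if g - x ∈ D then (1 : ℂ) else 0) * (if x = 0 then (c : ℂ) else 0)
          = c * (if g ∈ D then 1 else 0) := by
        simp
      have a3 : ∑ x, (if g - x = 0 then (c : ℂ) else 0) * (if x ∈ D then 1 else 0)
          = c * (if g ∈ D then 1 else 0) := by
        simp only [sub_eq_zero]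
        simp
      have a4 : ∑ x, (if g - x = 0 then (c : ℂ) else 0) * (if x = 0 then (c : ℂ) else 0)
          = (if g = 0 then (c : ℂ) ^ 2 else 0) := by
        simp only [sub_eq_zero]
        simp [pow_two]
      rw [a1, a2, a3, a4]; ring
    rw [h2] at h1
    have : ((Finset.univ.filter fun x => g - x ∈ D ∧ x ∈ D).card : ℂ) =
      (if g ∈ D then (u : ℂ) - 2 * c else 0) + (if g = 0 then (u : ℂ) * c - c ^ 2 else 0) + (c ^ 2 - c) := by
      simp only [hf] at h1
      by_cases hg : g ∈ D
      · have hg0 : g ≠ 0 := by rintro rfl; exact h0 hg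
        simp only [hg, hg0, if_true, if_false] at h1 ⊢
        linear_combination h1
      · by_cases hg0 : g = 0
        · simp only [hg, hg0, h0, if_true, if_false] at h1 ⊢
          linear_combination h1
        · simp only [hg, hg0, if_true, if_false] at h1 ⊢
          linear_combination h1
    have h3 : (((Finset.univ.filter fun x => g - x ∈ D ∧ x ∈ D).card : ℤ) : ℂ) =
      (((if g ∈ D then (u : ℤ) - 2 * c else 0) + (if g = 0 then u * c - c ^ 2 else 0) + (c ^ 2 - c) : ℤ) : ℂ) := by
      push_cast
      exact this
    exact_mod_cast h3
  have hk : (D.card : ℤ) = c * ((u : ℤ) - 1) := by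
    have := hN 0
    have hd : ∀ x, (-x ∈ D ∧ x ∈ D) ↔ x ∈ D := fun x => by rw [← hD, and_self]
    simp only [zero_sub, hd, h0, if_false, if_true, Finset.filter_univ_mem] at this
    rw [this]; ring
  have hμ : 0 ≤ c ^ 2 - c := by
    rcases le_or_gt c 0 with h | h <;> nlinarith
  have hl : 0 ≤ (u : ℤ) + c ^ 2 - 3 * c := by
    rcases D.eq_empty_or_nonempty with h | ⟨g, hg⟩
    · rw [h, Finset.card_empty] at hk
      have : c = 0 := by
        rcases mul_eq_zero.1 (hk.symm.trans Nat.cast_zero) with h | h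
        · exact h
        · omega
      subst this; simp
    · have hg0 : g ≠ 0 := by rintro rfl; exact h0 hg
      have := hN g
      simp only [hg, hg0, if_true, if_false] at this
      have h' : (0 : ℤ) ≤ ((Finset.univ.filter fun x => g - x ∈ D ∧ x ∈ D).card : ℤ) := Int.natCast_nonneg _
      linarith
  obtain ⟨μ, hμ'⟩ := Int.eq_ofNat_of_zero_le hμ
  obtain ⟨l, hl'⟩ := Int.eq_ofNat_of_zero_le hl
  have hadj : ∀ a b, (SimpleGraph.fromRel fun a b : G => a - b ∈ D).Adj a b ↔ a - b ∈ D := by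
    intro a b
    rw [SimpleGraph.fromRel_adj, hD (b - a), neg_sub, or_self]
    constructor
    · exact fun h => h.2
    · intro h
      refine ⟨?_, h⟩
      rintro rfl; simp at h; exact h0 h
  have hcn : ∀ a b, Fintype.card ((SimpleGraph.fromRel fun a b : G => a - b ∈ D).commonNeighbors a b)
      = (Finset.univ.filter fun x => (a - b) - x ∈ D ∧ x ∈ D).card := by
    intro a b
    rw [Fintype.card_of_subtype ((Finset.univ.filter fun x => (a - b) - x ∈ D ∧ x ∈ D).map
      (Equiv.addRight b).toEmbedding)]
    · simp
    · intro x
      simp only [Finset.mem_map_equiv, Finset.mem_filter, Finset.mem_univ, true_and,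
        SimpleGraph.mem_commonNeighbors, hadj, Equiv.addRight_symm, Equiv.coe_addRight]
      rw [hD (b - x), neg_sub, show a - b - (x + -b) = a - x by abel, ← sub_eq_add_neg]
  refine ⟨D.card, l, μ, ⟨hcard, ?_, ?_, ?_⟩, hk, hl'.symm, hμ'.symm⟩
  · intro v
    rw [← SimpleGraph.card_neighborSet_eq_degree,
      Fintype.card_of_subtype (D.map (Equiv.addRight v).toEmbedding)]
    · simp
    · intro x
      simp only [Finset.mem_map_equiv, SimpleGraph.mem_neighborSet, hadj, Equiv.addRight_symm,
        Equiv.coe_addRight]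
      rw [hD (v - x), neg_sub, ← sub_eq_add_neg]
  · intro v w h
    rw [hadj] at h
    have hg0 : v - w ≠ 0 := fun h' => h0 (h' ▸ h)
    have := hN (v - w)
    simp only [h, hg0, if_true, if_false] at this
    have h2 := hcn v w
    zify at h2 ⊢
    rw [this] at h2
    convert h2.trans _ using 1
    linear_combination hl'
  · intro v w hvw h
    rw [hadj] at h
    have hg0 : v - w ≠ 0 := sub_ne_zero.2 hvw
    have := hN (v - w)
    simp only [h, hg0, if_true, if_false] at this
    have h2 := hcn v w
    zify at h2 ⊢
    rw [this] at h2
    convert h2.trans _ using 1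
    linear_combination hμ'

lemma bb_final {m : ℕ} [NeZero m] {A : Type*} [CommRing A] [Algebra ℂ A] (τ : AddChar (ZMod m) A)
    {G : Type*} [AddCommGroup G] [Fintype G] {u : ℕ} (X : BB τ G u) (hu : 2 ≤ u)
    (S : Finset (ZMod m)) (L : A →ₗ[ℂ] ℂ)
    (hL : ∀ t, L (τ t) = (if t ∈ S then 1 else 0) - S.card / m) (t1 t2 : ZMod m) (c : ℤ)
    (hc : (m : ℤ) * c = S.card * ((u : ℤ) - 1) +
      m * ((if t1 ∈ S then 1 else 0) + (if t2 ∈ S then 1 else 0))) :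
    ∃ D : Finset G, 0 ∉ D ∧ (∀ g ∈ D, -g ∈ D) ∧ ∃ k l μ : ℕ,
          (SimpleGraph.fromRel fun a b : G => a - b ∈ D).IsSRGWith
            (u ^ 2) k l μ ∧
          (k : ℤ) = c * ((u : ℤ) - 1) ∧
          (l : ℤ) = (u : ℤ) + c ^ 2 - 3 * c ∧
          (μ : ℤ) = c ^ 2 - c := by
  have hm : (m : ℂ) ≠ 0 := by exact_mod_cast NeZero.ne m
  set κ : ℂ := S.card / m with hκ
  have hcC : (c : ℂ) = κ * (u - 1) + ((if t1 ∈ S then 1 else 0) + (if t2 ∈ S then 1 else 0)) := by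
    have : ((m * c : ℤ) : ℂ) = ((S.card * ((u : ℤ) - 1) +
      m * ((if t1 ∈ S then 1 else 0) + (if t2 ∈ S then 1 else 0)) : ℤ) : ℂ) := by rw [hc]
    push_cast at this
    rw [hκ]; field_simp
    linear_combination this
  let Φ : G → A := fun z => τ t1 * X.aE z + τ t2 * X.aO z
  let Φ' : G → A := fun z => τ t1 * X.aE' z + τ t2 * X.aO' z
  have hlab : ∀ a1 a2 b1 b2, BBDich τ a1 a2 b1 b2 →
      κ + L (τ t1 * a1 + τ t2 * a2) = 0 ∨ κ + L (τ t1 * a1 + τ t2 * a2) = 1 := by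
    have key : ∀ t, κ + L (τ t) = 0 ∨ κ + L (τ t) = 1 := by
      intro t; rw [hL]; by_cases h : t ∈ S <;> simp [h]
    rintro a1 a2 b1 b2 (⟨⟨t, rfl⟩, rfl, -, -⟩ | ⟨rfl, ⟨t, rfl⟩, -, -⟩)
    · rw [mul_zero, add_zero, ← AddChar.map_add_eq_mul]; exact key _
    · rw [mul_zero, zero_add, ← AddChar.map_add_eq_mul]; exact key _
  let f : G → ℂ := fun z => κ * (1 + if z = 0 then (u : ℂ) else 0) + L (Φ z)
  let f' : G → ℂ := fun z => κ * (1 + if z = 0 then (u : ℂ) else 0) + L (Φ' z)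
  have f0 : f 0 = c := by
    simp only [f, Φ, X.aE0, X.aO0, mul_one, map_add, hL, if_true, hcC]; ring
  have f0' : f' 0 = c := by
    simp only [f', Φ', X.aE0', X.aO0', mul_one, map_add, hL, if_true, hcC]; ring
  have fn : ∀ z, z ≠ 0 → f z = 0 ∨ f z = 1 := by
    intro z hz
    simpa [f, Φ, hz] using hlab _ _ _ _ (X.dich z hz)
  have fn' : ∀ z, z ≠ 0 → f' z = 0 ∨ f' z = 1 := by
    intro z hz
    simpa [f', Φ', hz] using hlab _ _ _ _ (X.dich' z hz)
  have hfneg : ∀ z, f (-z) = f z := by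
    intro z; simp only [f, Φ, X.aEn, X.aOn, neg_eq_zero]
  refine ⟨Finset.univ.filter fun z => z ≠ 0 ∧ f z = 1, by simp, by simp [hfneg], ?_⟩
  refine bb_srg X.toBBPair hu _ (by simp) (by simp [hfneg]) c f' ?_ ?_
  · intro w
    by_cases hw : w = 0
    · subst hw; rw [f0']; simp; ring
    · rcases fn' w hw with h | h <;> simp [h, hw]
  · intro w
    have e1 : ∀ z, ((if z ∈ Finset.univ.filter (fun z => z ≠ 0 ∧ f z = 1) then (1 : ℂ) else 0)
        + if z = 0 then (c : ℂ) else 0) = f z := by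
      intro z
      by_cases hz : z = 0
      · subst hz; simp [f0]
      · rcases fn z hz with h | h <;> simp [h, hz]
    simp only [e1]
    simp only [f, f', mul_add, Finset.sum_add_distrib]
    have e2 : ∑ z, X.e z w * L (Φ z) = u * L (Φ' w) := by
      have : ∑ z, X.e z w • Φ z = (u : ℂ) • Φ' w := by
        simp only [Φ, Φ', smul_add, Finset.sum_add_distrib, ← mul_smul_comm, ← Finset.mul_sum,
          X.faE, X.faO]
      have := congrArg L this
      simpa only [map_sum, map_smul, smul_eq_mul] using this
    have e3 : ∑ z, X.e z w * (κ * 1) = κ * if w = 0 then (u : ℂ) ^ 2 else 0 := by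
      rw [← Finset.sum_mul, X.orth']; ring
    have e4 : ∑ z, X.e z w * (κ * if z = 0 then (u : ℂ) else 0) = κ * u := by
      simp [X.zero]
    rw [e2, e3, e4]
    split_ifs <;> ring

lemma bb_pick {m : ℕ} [NeZero m] (T : Finset (ZMod m)) (i : ℕ) (h : i + T.card ≤ m) :
    ∃ S : Finset (ZMod m), S.card = i ∧ ∀ t ∈ T, t ∉ S := by
  have : i ≤ (Finset.univ \ T).card := by
    rw [Finset.card_sdiff_of_subset (Finset.subset_univ T), Finset.card_univ, ZMod.card]; omega
  obtain ⟨S, hS, hc⟩ := Finset.exists_subset_card_eq this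
  exact ⟨S, hc, fun t ht hs => (Finset.mem_sdiff.1 (hS hs)).2 ht⟩

theorem stmt_18 (m s : ℕ) (hm : 0 < m) (hs : 0 < s)
    (q : Fin s → ℕ) (hq : ∀ i, IsPrimePow (q i)) (hdvd : ∀ i, 2 * m ∣ q i + 1)
    (F : Fin s → Type*) [∀ i, Field (F i)] [∀ i, Fintype (F i)]
    (hcard : ∀ i, Fintype.card (F i) = q i ^ 4)
    (u : ℕ) (hu : u = ∏ i, q i ^ 2) :
    -- form 1: c = (i+j)(u−1)/m + j for 0 ≤ i ≤ m−2, j ∈ {0,1,2}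
    (∀ i j : ℕ, i + 2 ≤ m → j ≤ 2 → ∀ c : ℤ,
      (m : ℤ) * c = ((i : ℤ) + j) * ((u : ℤ) - 1) + (m : ℤ) * j →
      ∃ D : Finset (∀ i', F i'),
        (0 : ∀ i', F i') ∉ D ∧ (∀ g ∈ D, -g ∈ D) ∧
        ∃ k l μ : ℕ,
          (SimpleGraph.fromRel fun a b : ∀ i', F i' => a - b ∈ D).IsSRGWith
            (u ^ 2) k l μ ∧
          (k : ℤ) = c * ((u : ℤ) - 1) ∧
          (l : ℤ) = (u : ℤ) + c ^ 2 - 3 * c ∧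
          (μ : ℤ) = c ^ 2 - c) ∧
    -- form 2: c = (j+i)(u−1)/m + 2j for 0 ≤ i ≤ m−1, j ∈ {0,1}
    (∀ i j : ℕ, i + 1 ≤ m → j ≤ 1 → ∀ c : ℤ,
      (m : ℤ) * c = ((j : ℤ) + i) * ((u : ℤ) - 1) + 2 * (m : ℤ) * j →
      ∃ D : Finset (∀ i', F i'),
        (0 : ∀ i', F i') ∉ D ∧ (∀ g ∈ D, -g ∈ D) ∧
        ∃ k l μ : ℕ,
          (SimpleGraph.fromRel fun a b : ∀ i', F i' => a - b ∈ D).IsSRGWith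
            (u ^ 2) k l μ ∧
          (k : ℤ) = c * ((u : ℤ) - 1) ∧
          (l : ℤ) = (u : ℤ) + c ^ 2 - 3 * c ∧
          (μ : ℤ) = c ^ 2 - c) := by
  haveI : NeZero m := ⟨hm.ne'⟩
  obtain ⟨A, _, _, τ, hτ, hL⟩ := bb_exists_A m
  obtain ⟨X⟩ := BB.pi τ s q F (fun i => bb_field τ hτ (q i) (hq i) (hdvd i) (F i) (hcard i))
  rw [← hu] at X
  have hu2 : 2 ≤ u := by
    have h1 : ∀ i, 2 ≤ q i ^ 2 := fun i => by
      have := (hq i).one_lt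
      nlinarith
    rw [hu]
    calc 2 ≤ q ⟨0, hs⟩ ^ 2 := h1 _
      _ ≤ ∏ i, q i ^ 2 := Finset.single_le_prod' (f := fun i => q i ^ 2)
          (fun i _ => by have := h1 i; omega) (Finset.mem_univ _)
  have fin : ∀ (S : Finset (ZMod m)) (t1 t2 : ZMod m) (c : ℤ),
      ((m : ℤ) * c = S.card * ((u : ℤ) - 1) +
        m * ((if t1 ∈ S then 1 else 0) + (if t2 ∈ S then 1 else 0))) →
      ∃ D : Finset (∀ i', F i'),
        (0 : ∀ i', F i') ∉ D ∧ (∀ g ∈ D, -g ∈ D) ∧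
        ∃ k l μ : ℕ,
          (SimpleGraph.fromRel fun a b : ∀ i', F i' => a - b ∈ D).IsSRGWith
            (u ^ 2) k l μ ∧
          (k : ℤ) = c * ((u : ℤ) - 1) ∧
          (l : ℤ) = (u : ℤ) + c ^ 2 - 3 * c ∧
          (μ : ℤ) = c ^ 2 - c := by
    intro S t1 t2 c hc
    obtain ⟨L, hL'⟩ := hL S
    obtain ⟨D, h1, h2, k, l, μ, h3, h4⟩ := bb_final τ X hu2 S L hL' t1 t2 c hc
    exact ⟨D, h1, h2, k, l, μ, by convert h3, h4⟩
  constructor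
  · intro i j hi hj c hc
    have h01 : (0 : ZMod m) ≠ 1 := by
      haveI : Fact (1 < m) := ⟨by omega⟩
      exact zero_ne_one
    obtain ⟨S, hS, hT⟩ := bb_pick (m := m) {0, 1} i (by rw [Finset.card_pair h01]; exact hi)
    have hS0 : (0 : ZMod m) ∉ S := hT 0 (by simp)
    have hS1 : (1 : ZMod m) ∉ S := hT 1 (by simp)
    interval_cases j
    · refine fin S 0 1 c ?_
      rw [hc, hS]; simp [hS0, hS1]
    · refine fin (insert 0 S) 0 1 c ?_
      rw [hc, Finset.card_insert_of_notMem hS0, hS]; simp [hS1, h01.symm]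
    · refine fin (insert 0 (insert 1 S)) 0 1 c ?_
      rw [hc, Finset.card_insert_of_notMem (by simp [h01, hS0]), Finset.card_insert_of_notMem hS1, hS]
      push_cast
      simp only [Finset.mem_insert, true_or, or_true, if_true]; ring
  · intro i j hi hj c hc
    obtain ⟨S, hS, hT⟩ := bb_pick (m := m) {0} i (by simpa using hi)
    have hS0 : (0 : ZMod m) ∉ S := hT 0 (by simp)
    interval_cases j
    · refine fin S 0 0 c ?_
      rw [hc, hS]; simp [hS0]
    · refine fin (insert 0 S) 0 0 c ?_
      rw [hc, Finset.card_insert_of_notMem hS0, hS]; simp; ring
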